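/- arXiv:2508.18578 — 2 statements merged into one kernel-verified Lean document; each statement's English description precedes it below -/
import Mathlib

section
/- Let K be a field and consider the matrices A(z) and B(z) = I + z⁻¹B₀ over K(x,y,t,w), where A(z) is the q-Painlevé I Lax matrix and B₀ = s·[[x(1 - 1/y), wx/y],[-w⁻¹xy(1 - 1/y)², -x(1 - 1/y)]]. Then the compatibility identity Ā(z)·B(z) = B(sz)·A(z) holds, where Ā(z) is A(z) with (x,y,t,w) replaced by (t/(x - s⁻¹y), sx/y, st, (1 - sx/y)w). -/
open Matrix

/-- The q-Painlevé I Lax matrix A(z) = A₀ + z A₁ + z² A₂. -/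
def qP1LaxA {K : Type*} [Field K] (x y t w z : K) : Matrix (Fin 2) (Fin 2) K :=
  !![(t + x - x*y) + z*(y - x + x/y - 1 - t/x) + z^2,
     (-(w*x)) + z*w;
     w⁻¹*(t + x - t*y - 2*x*y + x*y^2) + z*(w⁻¹*(y - 2*x - 1 + x*y + x/y - t/x)),
     x*(y - 1) + z]

/-- The deformation matrix B(z) = I + z⁻¹ B₀. -/
def qP1LaxB {K : Type*} [Field K] (s x y w z : K) : Matrix (Fin 2) (Fin 2) K :=
  1 + z⁻¹ • !![s * (x * (1 - 1/y)), s * (w * x / y);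
               s * (-(w⁻¹ * (x * y) * (1 - 1/y)^2)), s * (-(x * (1 - 1/y)))]

/-- The compatibility identity Ā(z)·B(z) = B(sz)·A(z), where
Ā(z) is A(z) with (x,y,t,w) replaced by
(t/(x - s⁻¹y), sx/y, st, (1 - sx/y)w). -/
theorem qP1_lax_compatibility {K : Type*} [Field K]
    (s x y t w : K) (hs : s ≠ 0) (hx : x ≠ 0) (hy : y ≠ 0) (ht : t ≠ 0)
    (hw : w ≠ 0) (hxy : s * x ≠ y)
    (z : K) (hz : z ≠ 0) :
    qP1LaxA (t / (x - s⁻¹ * y)) (s * x / y) (s * t) ((1 - s * x / y) * w) z *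
        qP1LaxB s x y w z
      = qP1LaxB s x y w (s * z) * qP1LaxA x y t w z := by
  have hd : s * x - y ≠ 0 := sub_ne_zero.mpr hxy
  have e1 : t / (x - s⁻¹ * y) = s * t / (s * x - y) := by
    have h : x - s⁻¹ * y = (s * x - y) / s := by field_simp
    rw [h]; field_simp
  have e2 : (1 - s * x / y) * w = -((s * x - y) * w / y) := by
    field_simp; ring
  have e3 : (-((s * x - y) * w / y))⁻¹ = -(y / ((s * x - y) * w)) := by
    rw [inv_neg, inv_div]
  have e4 : s * t / (s * t / (s * x - y)) = s * x - y := by field_simp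
  have e5 : s * t / (s * x - y) / (s * x / y) = t * y / ((s * x - y) * x) := by field_simp
  rw [e1, e2]
  unfold qP1LaxA qP1LaxB
  rw [e3, e4, e5]
  ext i j
  fin_cases i <;> fin_cases j <;>
    simp [Matrix.mul_apply, Fin.sum_univ_two, -neg_mul, -mul_neg] <;>
    field_simp <;> ring
end

section
/- Let K be a field in which 1 + 1 ≠ 0 and consider, for parameters t ≠ 0 and c, the plane spectral curve λ² - (t + cz + z²)λ + z³ = 0 (the case r = 1). This affine curve has a singular point (a point where both partial derivatives with respect to λ and z vanish and the equation holds) if and only if c⁴ - c³ - 8tc² + 36tc + 16t² - 27t = 0. -/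
theorem curve_aux {L : Type*} [Field L] [IsAlgClosed L] (h2 : (2 : L) ≠ 0) (t c : L) (ht : t ≠ 0) :
    (∃ z l : L, l ^ 2 - (t + c * z + z ^ 2) * l + z ^ 3 = 0 ∧
      -(c + 2 * z) * l + 3 * z ^ 2 = 0 ∧ 2 * l - (t + c * z + z ^ 2) = 0) ↔
    c ^ 4 - c ^ 3 - 8 * t * c ^ 2 + 36 * t * c + 16 * t ^ 2 - 27 * t = 0 := by
  constructor
  · rintro ⟨z, l, h0, h1, h3⟩
    have hl : l ^ 2 = z ^ 3 := by linear_combination h3 * l - h0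
    have hz : z ≠ 0 := by
      rintro rfl
      have : l = 0 := by simpa using hl
      subst this
      apply ht
      linear_combination -h3
    obtain ⟨s, rfl⟩ : ∃ s, l = s * z := ⟨l / z, by field_simp⟩
    have hs : z = s ^ 2 := by
      apply mul_left_cancel₀ (pow_ne_zero 2 hz)
      linear_combination -hl
    subst hs
    have hs0 : s ≠ 0 := by rintro rfl; simp at hz
    have hc : c = 3 * s - 2 * s ^ 2 := by
      apply mul_left_cancel₀ (pow_ne_zero 3 hs0)
      linear_combination -h1
    subst hc
    have htt : t = s ^ 4 - s ^ 3 := by linear_combination -h3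
    subst htt
    ring
  · intro hD
    suffices h : ∃ s : L, c = 3 * s - 2 * s ^ 2 ∧ t = s ^ 4 - s ^ 3 by
      obtain ⟨s, rfl, rfl⟩ := h
      exact ⟨s ^ 2, s ^ 3, by ring, by ring, by ring⟩
    obtain ⟨w, hw⟩ := IsAlgClosed.exists_pow_nat_eq (9 - 8 * c) (n := 2) (by norm_num)
    obtain ⟨s, hs⟩ : ∃ s : L, 4 * s = 3 + w :=
      ⟨(3 + w) / 2 / 2, by field_simp; ring⟩
    obtain ⟨u, hu⟩ : ∃ u : L, 2 * u = 3 - 2 * s := ⟨(3 - 2 * s) / 2, by field_simp⟩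
    have hw' : w = 4 * s - 3 := by linear_combination -hs
    subst hw'
    have hc : c = 3 * s - 2 * s ^ 2 := by
      apply mul_left_cancel₀ (pow_ne_zero 3 h2)
      linear_combination hw
    subst hc
    have hp : (t - s ^ 4 + s ^ 3) * (16 * t - (3 - 2 * s) ^ 3 * (1 - 2 * s)) = 0 := by
      linear_combination hD
    rcases mul_eq_zero.mp hp with h | h
    · exact ⟨s, rfl, by linear_combination h⟩
    · refine ⟨u, ?_, ?_⟩
      · apply mul_left_cancel₀ h2
        linear_combination (2 * u - 2 * s) * hu
      · have e : 1 - 2 * s = 2 * u - 2 := by linear_combination -hu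
        rw [← hu, e] at h
        apply mul_left_cancel₀ (pow_ne_zero 4 h2)
        linear_combination h

/-- For char K ≠ 2, t ≠ 0, the spectral curve
λ² - (t + cz + z²)λ + z³ = 0 has a singular point over the algebraic closure
if and only if c⁴ - c³ - 8tc² + 36tc + 16t² - 27t = 0. -/
theorem qP1_spectral_curve_singular_iff {K : Type*} [Field K]
    (hchar : (1 : K) + 1 ≠ 0) (t c : K) (ht : t ≠ 0) :
    (∃ z₀ l₀ : AlgebraicClosure K,
      let φ := algebraMap K (AlgebraicClosure K)
      l₀ ^ 2 - (φ t + φ c * z₀ + z₀ ^ 2) * l₀ + z₀ ^ 3 = 0 ∧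
      -(φ c + 2 * z₀) * l₀ + 3 * z₀ ^ 2 = 0 ∧
      2 * l₀ - (φ t + φ c * z₀ + z₀ ^ 2) = 0) ↔
    c ^ 4 - c ^ 3 - 8 * t * c ^ 2 + 36 * t * c + 16 * t ^ 2 - 27 * t = 0 := by
  have hinj := (algebraMap K (AlgebraicClosure K)).injective
  have h2 : (2 : AlgebraicClosure K) ≠ 0 := by
    intro h
    apply hchar
    apply hinj
    rw [map_add, map_one, map_zero, one_add_one_eq_two, h]
  refine (curve_aux h2 (algebraMap K _ t) (algebraMap K _ c) ?_).trans ?_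
  · exact (map_ne_zero _).mpr ht
  · rw [← hinj.eq_iff]
    simp only [map_add, map_sub, map_mul, map_pow, map_ofNat, map_zero]
end
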